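/- Let P_n be the path graph on n ≥ 1 vertices and let f_j := f_{P_j}(λ) denote the characteristic polynomial of the path graph on j vertices, with the convention f_0 = 1. Then the coronal of P_n is χ_{P_n}(λ) = (n·f_n − 2·∑_{j=0}^{n−1} f_j) / ((λ − 2)·f_n) as an element of ℂ(λ). -/

import Mathlib

open Matrix Polynomial

/-- The characteristic matrix `λ I - B` of `B`, over the field `ℂ(λ)` of rational functions. -/
noncomputable def charMatRatFunc {V : Type*} [Fintype V] [DecidableEq V]
    (B : Matrix V V ℂ) : Matrix V V (RatFunc ℂ) :=
  Matrix.scalar V (RatFunc.X : RatFunc ℂ) - B.map (algebraMap ℂ (RatFunc ℂ))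

/-- The coronal of a matrix `B`: the sum of the entries of `(λ I - B)⁻¹` over `ℂ(λ)`. -/
noncomputable def coronal {V : Type*} [Fintype V] [DecidableEq V]
    (B : Matrix V V ℂ) : RatFunc ℂ :=
  ∑ i, ∑ j, (charMatRatFunc B)⁻¹ i j

/-- The adjacency matrix of the corona `G ∘ H`. -/
def coronaMatrix {α β : Type*} (A : Matrix α α ℂ) (B : Matrix β β ℂ)
    [DecidableEq α] :
    Matrix (α ⊕ β × α) (α ⊕ β × α) ℂ :=
  Matrix.fromBlocks A
    (Matrix.of fun i p => if i = p.2 then 1 else 0)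
    (Matrix.of fun p j => if p.2 = j then 1 else 0)
    (Matrix.of fun p q => if p.2 = q.2 then B p.1 q.1 else 0)


/-- The adjacency matrix of the path graph `Pₙ`: vertices `1, …, n` with `i` adjacent to `j`
exactly when `|i - j| = 1`. -/
def pathMatrix (n : ℕ) : Matrix (Fin n) (Fin n) ℂ :=
  Matrix.of fun i j => if (i : ℕ) + 1 = (j : ℕ) ∨ (j : ℕ) + 1 = (i : ℕ) then 1 else 0

/-!
The vector `(λI - A)⁻¹ 𝟙` for the path `Pₙ` can be written down explicitly. The polynomials `fⱼ`
satisfy `fⱼ₊₂ = λ fⱼ₊₁ - fⱼ`, so they are the rescaled Chebyshev polynomials `Sⱼ`, which make sense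
for every `j : ℤ`, with `S₋₁ = 0`. The vector with entries `uⱼ = Sₙ - Sⱼ - Sₙ₋₁₋ⱼ` for `0 ≤ j < n`
then extends to all of `ℤ` with `u₋₁ = uₙ = 0`, so `(λI - A) u` is computed in every row, the two
end rows included, by `λ uⱼ - uⱼ₋₁ - uⱼ₊₁ = (λ - 2) Sₙ`. Summing the entries of `u` gives the
numerator.
-/

section SparseCorner

variable {R : Type*} [CommRing R] {n : ℕ}

lemma det_eq_sub_of_apply_succ_succ_eq_zero (M : Matrix (Fin (n + 2)) (Fin (n + 2)) R)
    (hrow : ∀ j : Fin n, M 0 j.succ.succ = 0) (hcol : ∀ i : Fin n, M i.succ.succ 0 = 0) :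
    M.det = M 0 0 * (M.submatrix Fin.succ Fin.succ).det -
      M 0 1 * M 1 0 * ((M.submatrix Fin.succ Fin.succ).submatrix Fin.succ Fin.succ).det := by
  have minor_zero_one : (M.submatrix Fin.succ (Fin.succAbove 1)).det =
      M 1 0 * ((M.submatrix Fin.succ Fin.succ).submatrix Fin.succ Fin.succ).det := by
    rw [det_succ_column_zero, Fin.sum_univ_succ, Finset.sum_eq_zero fun i _ => by simp [hcol]]
    simp [Function.comp_def]
  rw [det_succ_row_zero, Fin.sum_univ_succ, Fin.sum_univ_succ,
    Finset.sum_eq_zero fun j _ => by simp [hrow], Fin.succ_zero_eq_one, minor_zero_one]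
  simp only [Fin.coe_ofNat_eq_mod, Nat.zero_mod, pow_zero, one_mul, Fin.succAbove_zero,
    Nat.one_mod, pow_one, neg_mul, submatrix_submatrix, add_zero]
  ring

lemma charmatrix_submatrix {m k : Type*} [Fintype m] [DecidableEq m] [Fintype k] [DecidableEq k]
    (M : Matrix m m R) {e : k → m} (he : Function.Injective e) :
    (charmatrix M).submatrix e e = charmatrix (M.submatrix e e) := by
  ext1 i j
  simp [charmatrix_apply, diagonal_apply, he.eq_iff]

lemma charpoly_eq_sub_of_apply_succ_succ_eq_zero (M : Matrix (Fin (n + 2)) (Fin (n + 2)) R)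
    (hrow : ∀ j : Fin n, M 0 j.succ.succ = 0) (hcol : ∀ i : Fin n, M i.succ.succ 0 = 0) :
    M.charpoly = (X - C (M 0 0)) * (M.submatrix Fin.succ Fin.succ).charpoly -
      C (M 0 1 * M 1 0) *
        ((M.submatrix Fin.succ Fin.succ).submatrix Fin.succ Fin.succ).charpoly := by
  have charmatrix_row (j : Fin n) : charmatrix M 0 j.succ.succ = 0 := by
    rw [charmatrix_apply_ne _ _ _ (Fin.succ_ne_zero _).symm, hrow, C_0, neg_zero]
  have charmatrix_col (i : Fin n) : charmatrix M i.succ.succ 0 = 0 := by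
    rw [charmatrix_apply_ne _ _ _ (Fin.succ_ne_zero _), hcol, C_0, neg_zero]
  rw [charpoly, det_eq_sub_of_apply_succ_succ_eq_zero _ charmatrix_row charmatrix_col,
    charmatrix_submatrix _ (Fin.succ_injective _), charmatrix_submatrix _ (Fin.succ_injective _)]
  simp [charpoly]

end SparseCorner

section Coronal

variable {V : Type*} [Fintype V] [DecidableEq V] (B : Matrix V V ℂ)

lemma charMatRatFunc_eq_map_charmatrix :
    charMatRatFunc B = (charmatrix B).map (algebraMap ℂ[X] (RatFunc ℂ)) := by
  ext1 i j
  simp [charMatRatFunc, charmatrix_apply, diagonal_apply, apply_ite (algebraMap ℂ[X] (RatFunc ℂ))]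

lemma det_charMatRatFunc :
    (charMatRatFunc B).det = algebraMap ℂ[X] (RatFunc ℂ) B.charpoly := by
  rw [charMatRatFunc_eq_map_charmatrix, charpoly, RingHom.map_det, RingHom.mapMatrix_apply]

lemma isUnit_det_charMatRatFunc : IsUnit (charMatRatFunc B).det := by
  rw [det_charMatRatFunc, isUnit_iff_ne_zero]
  exact RatFunc.algebraMap_ne_zero B.charpoly_monic.ne_zero

lemma coronal_eq_sum_inv_mulVec_one : coronal B = ∑ i, ((charMatRatFunc B)⁻¹ *ᵥ 1) i := by
  simp [coronal, mulVec, dotProduct]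

variable {B}

lemma coronal_eq_div_of_charmatrix_mulVec {v : V → ℂ[X]} {p : ℂ[X]} (hp : p ≠ 0)
    (hv : charmatrix B *ᵥ v = fun _ => p) :
    coronal B =
      algebraMap ℂ[X] (RatFunc ℂ) (∑ i, v i) / algebraMap ℂ[X] (RatFunc ℂ) p := by
  set φ := algebraMap ℂ[X] (RatFunc ℂ)
  have mulVec_map : charMatRatFunc B *ᵥ (φ ∘ v) = φ p • 1 := by
    ext1 i
    rw [charMatRatFunc_eq_map_charmatrix, ← RingHom.map_mulVec, hv]
    simp [φ]
  have map_eq_smul_inv : φ ∘ v = φ p • (charMatRatFunc B)⁻¹ *ᵥ 1 := by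
    rw [← mulVec_smul, ← mulVec_map, mulVec_mulVec,
      nonsing_inv_mul _ (isUnit_det_charMatRatFunc B), one_mulVec]
  rw [eq_div_iff (RatFunc.algebraMap_ne_zero hp), coronal_eq_sum_inv_mulVec_one, mul_comm,
    Finset.mul_sum, map_sum]
  exact Finset.sum_congr rfl fun i _ => (congrFun map_eq_smul_inv i).symm

end Coronal

section PathMatrix

lemma pathMatrix_submatrix_succ (n : ℕ) :
    (pathMatrix (n + 1)).submatrix Fin.succ Fin.succ = pathMatrix n := by
  ext1 i j
  simp [pathMatrix]

lemma charpoly_pathMatrix_add_two (n : ℕ) :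
    (pathMatrix (n + 2)).charpoly =
      X * (pathMatrix (n + 1)).charpoly - (pathMatrix n).charpoly := by
  rw [charpoly_eq_sub_of_apply_succ_succ_eq_zero _ (by simp [pathMatrix]) (by simp [pathMatrix]),
    pathMatrix_submatrix_succ, pathMatrix_submatrix_succ]
  simp [pathMatrix]

lemma charpoly_pathMatrix (n : ℕ) : (pathMatrix n).charpoly = Chebyshev.S ℂ n := by
  induction n using Nat.twoStepInduction with
  | zero => simp
  | one => simp [charpoly, pathMatrix]
  | more n ih ih_succ =>
    rw [charpoly_pathMatrix_add_two, ih, ih_succ]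
    exact_mod_cast (Chebyshev.S_add_two ℂ n).symm

lemma pathMatrix_map_mulVec_apply {R : Type*} [Semiring R] [Algebra ℂ R] {n : ℕ} {g : ℤ → R}
    (hg_left : g (-1) = 0) (hg_right : g n = 0) (i : Fin n) :
    ((pathMatrix n).map (algebraMap ℂ R) *ᵥ fun j => g j) i = g (i - 1) + g (i + 1) := by
  obtain ⟨i, hi⟩ := i
  have entry_mul (j : Fin n) : algebraMap ℂ R (pathMatrix n ⟨i, hi⟩ j) * g j =
      (if (j : ℕ) + 1 = i then g j else 0) + if (j : ℕ) = i + 1 then g j else 0 := by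
    simp only [pathMatrix, of_apply]
    split_ifs <;> first | omega | simp
  have sum_left : ∑ j ∈ Finset.range n, (if j + 1 = i then g j else 0) = g (i - 1) := by
    cases i with
    | zero => simp [hg_left]
    | succ k => simp [Nat.lt_of_succ_lt hi]
  have sum_right : ∑ j ∈ Finset.range n, (if j = i + 1 then g j else 0) = g (i + 1) := by
    obtain h_last | h_inner : i + 1 = n ∨ i + 1 < n := by omega
    · subst h_last
      simpa using hg_right.symm
    · simp [h_inner]
  simp only [mulVec, dotProduct, map_apply, entry_mul, Finset.sum_add_distrib]
  rw [← sum_left, ← sum_right, ← Fin.sum_univ_eq_sum_range, ← Fin.sum_univ_eq_sum_range]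

lemma charmatrix_pathMatrix_mulVec_apply {n : ℕ} {g : ℤ → ℂ[X]}
    (hg_left : g (-1) = 0) (hg_right : g n = 0) (i : Fin n) :
    (charmatrix (pathMatrix n) *ᵥ fun j => g j) i = X * g i - g (i - 1) - g (i + 1) := by
  rw [charmatrix, sub_mulVec, Pi.sub_apply, RingHom.mapMatrix_apply, ← algebraMap_eq,
    pathMatrix_map_mulVec_apply hg_left hg_right, scalar_apply, mulVec_diagonal, sub_sub]

end PathMatrix

section PathPotential

variable (R : Type*) [CommRing R]

/-- The polynomials `uⱼ = Sₙ - Sⱼ - Sₙ₋₁₋ⱼ`, which for `0 ≤ j < n` are the entries of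
`(λ - 2) Sₙ • (λI - A)⁻¹ 𝟙`, with `A` the adjacency matrix of the path on `n` vertices. The index
runs over `ℤ` so that the neighbours `j = -1` and `j = n` of the end vertices are available. -/
noncomputable def pathPotential (n j : ℤ) : R[X] :=
  Chebyshev.S R n - Chebyshev.S R j - Chebyshev.S R (n - 1 - j)

lemma pathPotential_neg_one (n : ℤ) : pathPotential R n (-1) = 0 := by
  simp [pathPotential]

lemma pathPotential_self (n : ℤ) : pathPotential R n n = 0 := by
  simp [pathPotential]

lemma X_mul_pathPotential_sub_sub (n j : ℤ) :
    X * pathPotential R n j - pathPotential R n (j - 1) - pathPotential R n (j + 1) =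
      (X - 2) * Chebyshev.S R n := by
  have recurrence := Chebyshev.S_add_one R j
  have recurrence_reflected := Chebyshev.S_add_one R (n - 1 - j)
  rw [pathPotential, pathPotential, pathPotential,
    show n - 1 - (j - 1) = n - 1 - j + 1 by ring, show n - 1 - (j + 1) = n - 1 - j - 1 by ring]
  linear_combination recurrence + recurrence_reflected

lemma sum_pathPotential (n : ℕ) :
    ∑ j : Fin n, pathPotential R n j =
      n * Chebyshev.S R n - 2 * ∑ j ∈ Finset.range n, Chebyshev.S R j := by
  have sum_reflected : ∑ j ∈ Finset.range n, Chebyshev.S R (n - 1 - j) =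
      ∑ j ∈ Finset.range n, Chebyshev.S R j := by
    rw [← Finset.sum_range_reflect]
    refine Finset.sum_congr rfl fun j hj => ?_
    have := Finset.mem_range.mp hj
    congr 1
    omega
  rw [Fin.sum_univ_eq_sum_range (fun j : ℕ => pathPotential R n j)]
  simp only [pathPotential, Finset.sum_sub_distrib, sum_reflected, Finset.sum_const,
    Finset.card_range, nsmul_eq_mul]
  ring

end PathPotential

lemma charmatrix_pathMatrix_mulVec_pathPotential (n : ℕ) :
    (charmatrix (pathMatrix n) *ᵥ fun j => pathPotential ℂ n j) =
      fun _ => (X - 2) * (pathMatrix n).charpoly := by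
  ext1 i
  rw [charmatrix_pathMatrix_mulVec_apply (pathPotential_neg_one ℂ n) (pathPotential_self ℂ n),
    X_mul_pathPotential_sub_sub, charpoly_pathMatrix]

/-- The coronal of the path graph `Pₙ` is `(n fₙ - 2 ∑_{j<n} fⱼ) / ((λ - 2) fₙ)`,
where `fⱼ` is the characteristic polynomial of `Pⱼ` (with `f₀ = 1`). -/
theorem coronal_path (n : ℕ) (hn : 1 ≤ n) :
    coronal (pathMatrix n) =
      algebraMap (Polynomial ℂ) (RatFunc ℂ)
          ((n : Polynomial ℂ) * (pathMatrix n).charpoly -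
            2 * ∑ j ∈ Finset.range n, (pathMatrix j).charpoly) /
        algebraMap (Polynomial ℂ) (RatFunc ℂ)
          ((Polynomial.X - 2) * (pathMatrix n).charpoly) := by
  have denominator_ne_zero : (X - 2) * (pathMatrix n).charpoly ≠ 0 :=
    mul_ne_zero (X_sub_C_ne_zero 2) (charpoly_monic _).ne_zero
  rw [coronal_eq_div_of_charmatrix_mulVec denominator_ne_zero
    (charmatrix_pathMatrix_mulVec_pathPotential n), sum_pathPotential]
  simp only [charpoly_pathMatrix]
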